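/- For every natural number $n$ and every real number $r > 0$, $\int_{(n+1+r)/r}^{+\infty} (u-1)^n\, u^{-n-r-2} \left(\frac{ru}{n+1+r} - 1\right) du = \frac{r^r (n+1)^{n+1}}{(n+r+1)^{n+r+2}}$. -/

import Mathlib

open Real MeasureTheory

/-!
Up to the factor `-1 / (n + 1 + r)`, the integrand is the derivative of
`u ↦ (u - 1) ^ (n + 1) * u ^ (-(n + 1 + r))`, which tends to `0` at infinity like `u ^ (-r)`.
The lower limit is the zero of the last factor of the integrand, so the integrand has constant
sign on the domain and the fundamental theorem of calculus applies without a separate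
integrability estimate.
-/

theorem hasDerivAt_sub_rpow_mul_rpow (a b : ℝ) {d u : ℝ} (hu : u ≠ 0) (hud : u ≠ d) :
    HasDerivAt (fun x : ℝ => (x - d) ^ a * x ^ b)
      ((u - d) ^ (a - 1) * u ^ (b - 1) * ((a + b) * u - b * d)) u := by
  have hsub : u - d ≠ 0 := sub_ne_zero.mpr hud
  have hleft : HasDerivAt (fun x : ℝ => (x - d) ^ a) (1 * a * (u - d) ^ (a - 1)) u :=
    ((hasDerivAt_id u).sub_const d).rpow_const (Or.inl hsub)
  have hright : HasDerivAt (fun x : ℝ => x ^ b) (b * u ^ (b - 1)) u :=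
    hasDerivAt_rpow_const (Or.inl hu)
  refine (hleft.mul hright).congr_deriv ?_
  rw [rpow_sub_one hsub, rpow_sub_one hu]
  field_simp
  ring

theorem tendsto_sub_rpow_mul_rpow_atTop_zero {a b : ℝ} (d : ℝ) (hab : a + b < 0) :
    Filter.Tendsto (fun x : ℝ => (x - d) ^ a * x ^ b) Filter.atTop (nhds 0) := by
  have hratio : Filter.Tendsto (fun x : ℝ => (1 - d / x) ^ a) Filter.atTop (nhds 1) := by
    have hbase : Filter.Tendsto (fun x : ℝ => 1 - d / x) Filter.atTop (nhds 1) := by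
      simpa only [id, sub_zero] using (Filter.tendsto_id.const_div_atTop d).const_sub 1
    simpa only [one_rpow] using hbase.rpow_const (p := a) (Or.inl one_ne_zero)
  have hpow : Filter.Tendsto (fun x : ℝ => x ^ (a + b)) Filter.atTop (nhds 0) := by
    simpa only [neg_neg] using tendsto_rpow_neg_atTop (neg_pos.mpr hab)
  have hprod := hratio.mul hpow
  rw [one_mul] at hprod
  refine hprod.congr' ?_
  filter_upwards [Filter.eventually_gt_atTop 0, Filter.eventually_ge_atTop d] with x hx hdx
  have hfactor : 1 - d / x = (x - d) / x := by field_simp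
  rw [hfactor, div_rpow (sub_nonneg.mpr hdx) hx.le, rpow_add hx]
  field_simp

theorem integral_Ioi_sub_rpow_mul_rpow_mul_sub {a b c d : ℝ} (hab : a + b < 0) (hc : 0 < c)
    (hdc : d < c) (hsign : (a + b) * c ≤ b * d) :
    ∫ u in Set.Ioi c, (u - d) ^ (a - 1) * u ^ (b - 1) * ((a + b) * u - b * d) =
      -((c - d) ^ a * c ^ b) := by
  have hderiv : ∀ u ∈ Set.Ici c, HasDerivAt (fun x : ℝ => (x - d) ^ a * x ^ b)
      ((u - d) ^ (a - 1) * u ^ (b - 1) * ((a + b) * u - b * d)) u := fun u hu =>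
    hasDerivAt_sub_rpow_mul_rpow a b (hc.trans_le hu).ne' (hdc.trans_le hu).ne'
  have hnonpos : ∀ u ∈ Set.Ioi c,
      (u - d) ^ (a - 1) * u ^ (b - 1) * ((a + b) * u - b * d) ≤ 0 := by
    intro u (hu : c < u)
    have hfactor : (a + b) * u ≤ b * d :=
      (mul_le_mul_of_nonpos_left hu.le hab.le).trans hsign
    exact mul_nonpos_of_nonneg_of_nonpos
      (mul_nonneg (rpow_nonneg (sub_nonneg.mpr (hdc.trans hu).le) _)
        (rpow_nonneg (hc.trans hu).le _))
      (sub_nonpos.mpr hfactor)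
  rw [integral_Ioi_of_hasDerivAt_of_nonpos' hderiv hnonpos
    (tendsto_sub_rpow_mul_rpow_atTop_zero d hab), zero_sub]

theorem add_div_sub_one_rpow_mul_add_div_rpow_neg {p q : ℝ} (hp : 0 ≤ p) (hq : 0 < q) :
    ((p + q) / q - 1) ^ p * ((p + q) / q) ^ (-(p + q)) =
      q ^ q * p ^ p / (p + q) ^ (p + q) := by
  have hsub : (p + q) / q - 1 = p / q := by field_simp; ring
  rw [hsub, div_rpow hp hq.le, rpow_neg (by positivity), div_rpow (by positivity) hq.le,
    inv_div, rpow_add hq]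
  field_simp

theorem lemma22_general {s r : ℝ} (hs : -1 < s) (hr : 0 < r) :
    ∫ u in Set.Ici ((s + 1 + r) / r),
        (u - 1) ^ s * u ^ (-s - r - 2) * (r * u / (s + 1 + r) - 1)
      = r ^ r * (s + 1) ^ (s + 1) / (s + r + 1) ^ (s + r + 2) := by
  have hs1 : 0 < s + 1 := by linarith
  set N := s + 1 + r with hN
  have hN0 : 0 < N := by positivity
  have hlower : 1 < N / r := by rw [one_lt_div hr]; linarith
  have hzero : (s + 1 + -N) * (N / r) = -N * 1 := by rw [hN]; field_simp; ring
  calc ∫ u in Set.Ici (N / r), (u - 1) ^ s * u ^ (-s - r - 2) * (r * u / N - 1)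
      = ∫ u in Set.Ioi (N / r), -N⁻¹ *
          ((u - 1) ^ (s + 1 - 1) * u ^ (-N - 1) * ((s + 1 + -N) * u - -N * 1)) := by
        rw [integral_Ici_eq_integral_Ioi]
        congr! 2 with u
        rw [add_sub_cancel_right, show -s - r - 2 = -N - 1 by ring,
          show s + 1 + -N = -r by ring]
        field_simp
        ring
    _ = N⁻¹ * ((N / r - 1) ^ (s + 1) * (N / r) ^ (-N)) := by
        rw [integral_const_mul, integral_Ioi_sub_rpow_mul_rpow_mul_sub (by linarith) (by positivity)
          hlower hzero.le, neg_mul_neg]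
    _ = r ^ r * (s + 1) ^ (s + 1) / N ^ (N + 1) := by
        rw [add_div_sub_one_rpow_mul_add_div_rpow_neg hs1.le hr, ← hN, rpow_add_one hN0.ne']
        field_simp
    _ = r ^ r * (s + 1) ^ (s + 1) / (s + r + 1) ^ (s + r + 2) := by
        rw [show s + r + 1 = N by ring, show s + r + 2 = N + 1 by ring]

/-- Lemma 2.2: for `n ∈ ℕ` and `r > 0`,
`∫_{(n+1+r)/r}^∞ (u-1)^n u^{-n-r-2} (ru/(n+1+r) - 1) du
  = r^r (n+1)^{n+1} / (n+r+1)^{n+r+2}`. -/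
theorem lemma22 (n : ℕ) (r : ℝ) (hr : 0 < r) :
    ∫ u in Set.Ici ((n + 1 + r) / r),
        (u - 1) ^ n * u ^ (-(n : ℝ) - r - 2) * (r * u / (n + 1 + r) - 1)
      = r ^ r * (n + 1 : ℝ) ^ (n + 1) / (n + r + 1) ^ ((n : ℝ) + r + 2) := by
  have hn : (-1 : ℝ) < n := neg_one_lt_zero.trans_le n.cast_nonneg
  exact_mod_cast lemma22_general hn hr
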